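/- For every integer k ≥ 3 and every odd integer j, the permutation σ of ZMod 2^k defined by σ(i) = 3·(i + j) has exactly 2 cycles, each of length 2^{k-1}. -/

import Mathlib

/-!
The quantity `2 * i + 3 * j` is multiplied by `3` at each step of `σ`, so
`σ^m i = i + s * (2 * i + 3 * j)` where `3 ^ m = 1 + 2 * s`. The factor `2 * i + 3 * j` is odd,
hence `i` is fixed by `σ^m` exactly when `2 ^ k ∣ s`, that is, `2 ^ (k + 1) ∣ 3 ^ m - 1`.
Since `3 ^ 2 ^ (n + 1) = 1 + 2 ^ (n + 3) * c` with `c` odd (`three_pow_two_pow`), every point has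
minimal period `2 ^ (k - 1)` (`minimalPeriod_mul_three_shift`). So all orbits have half the size
of `ZMod (2 ^ k)`, and there are two of them.
-/

/-- The number of cycles of a permutation `σ` (counting fixed points):
the number of orbits of the subgroup generated by `σ`. -/
noncomputable def cyc {α : Type*} (σ : Equiv.Perm α) : ℕ :=
  Nat.card (MulAction.orbitRel.Quotient (Subgroup.zpowers σ) α)

lemma three_pow_two_pow (n : ℕ) :
    ∃ c : ℤ, Odd c ∧ (3 : ℤ) ^ 2 ^ (n + 1) = 1 + 2 ^ (n + 3) * c := by
  induction n with
  | zero => exact ⟨1, odd_one, by norm_num⟩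
  | succ n ih =>
    obtain ⟨c, hc, h⟩ := ih
    refine ⟨c + 2 ^ (n + 2) * c ^ 2, hc.add_even ?_, ?_⟩
    · exact Even.mul_right (by simp [Int.even_pow]) _
    · rw [pow_succ 2 (n + 1), pow_mul, h]
      ring

lemma iterate_mul_three_shift {R : Type*} [CommRing R] (f : R → R) (j : R)
    (hf : ∀ i, f i = 3 * (i + j)) (m : ℕ) :
    ∃ s : ℤ, (3 : ℤ) ^ m = 1 + 2 * s ∧ ∀ i, f^[m] i = i + s * (2 * i + 3 * j) := by
  induction m with
  | zero => exact ⟨0, by simp, by simp⟩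
  | succ m ih =>
    obtain ⟨s, hs, h⟩ := ih
    refine ⟨3 * s + 1, by rw [pow_succ, hs]; ring, fun i => ?_⟩
    rw [Function.iterate_succ_apply', h, hf]
    push_cast
    ring

lemma minimalPeriod_mul_three_shift (n : ℕ) (j : ℤ) (hj : Odd j)
    (f : ZMod (2 ^ (n + 3)) → ZMod (2 ^ (n + 3)))
    (hf : ∀ i, f i = 3 * (i + (j : ZMod (2 ^ (n + 3))))) (x : ZMod (2 ^ (n + 3))) :
    Function.minimalPeriod f x = 2 ^ (n + 2) := by
  have : Fact (Nat.Prime 2) := ⟨Nat.prime_two⟩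
  obtain ⟨a, rfl⟩ := ZMod.intCast_surjective x
  have hodd : Odd (2 * a + 3 * j) :=
    (even_two_mul a).add_odd ((by decide : Odd (3 : ℤ)).mul hj)
  refine Function.minimalPeriod_eq_prime_pow (p := 2) (k := n + 1) ?_ ?_
  · obtain ⟨c, hc, h3⟩ := three_pow_two_pow n
    obtain ⟨s, hs, h⟩ := iterate_mul_three_shift f _ hf (2 ^ (n + 1))
    have hs' : s = 2 ^ (n + 2) * c := by
      have : 2 * s = 2 * (2 ^ (n + 2) * c) := by rw [h3] at hs; linear_combination -hs
      linarith
    intro hp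
    rw [Function.IsPeriodicPt, Function.IsFixedPt, h, add_eq_left] at hp
    have hz : ((s * (2 * a + 3 * j) : ℤ) : ZMod (2 ^ (n + 3))) = 0 := by
      push_cast; exact hp
    rw [ZMod.intCast_zmod_eq_zero_iff_dvd] at hz
    push_cast at hz
    rw [hs', pow_succ _ (n + 2), mul_assoc] at hz
    have h2 := (mul_dvd_mul_iff_left (by positivity)).1 hz
    exact (Int.not_even_iff_odd.2 (hc.mul hodd)) (even_iff_two_dvd.2 h2)
  · obtain ⟨c, hc, h3⟩ := three_pow_two_pow (n + 1)
    obtain ⟨s, hs, h⟩ := iterate_mul_three_shift f _ hf (2 ^ (n + 1 + 1))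
    have hs' : s = 2 ^ (n + 3) * c := by
      have : 2 * s = 2 * (2 ^ (n + 3) * c) := by rw [h3] at hs; linear_combination -hs
      linarith
    have hz : (s : ZMod (2 ^ (n + 3))) = 0 := by
      rw [ZMod.intCast_zmod_eq_zero_iff_dvd, hs']
      push_cast
      exact dvd_mul_right _ _
    rw [Function.IsPeriodicPt, Function.IsFixedPt, h, hz, zero_mul, add_zero]

/-- If all points have the same minimal period `d`, each orbit has `d` elements. -/
lemma cyc_mul_eq_card {α : Type*} [Finite α] (σ : Equiv.Perm α) (d : ℕ)
    (h : ∀ x, Function.minimalPeriod σ x = d) : cyc σ * d = Nat.card α := by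
  classical
  have := Fintype.ofFinite α
  have e := Nat.card_congr (MulAction.selfEquivSigmaOrbits (Subgroup.zpowers σ) α)
  rw [e, Nat.card_sigma]
  have key : ∀ x : α, Nat.card (MulAction.orbit (Subgroup.zpowers σ) x) = d := by
    intro x
    rw [← h x, Nat.card_eq_fintype_card]
    exact (MulAction.minimalPeriod_eq_card (a := σ) (b := x)).symm
  simp only [key, cyc, Nat.card_eq_fintype_card, Finset.sum_const, Finset.card_univ, smul_eq_mul]

/-- If all points have the same minimal period `d`, each cycle has length `d`. -/
lemma eq_of_mem_cycleType {α : Type*} [Fintype α] [DecidableEq α] (σ : Equiv.Perm α) (d : ℕ)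
    (h : ∀ x, Function.minimalPeriod σ x = d) {m : ℕ} (hm : m ∈ σ.cycleType) : m = d := by
  rw [Equiv.Perm.cycleType_def, Multiset.mem_map] at hm
  obtain ⟨c, hc, rfl⟩ := hm
  have hc' : c ∈ σ.cycleFactorsFinset := hc
  obtain ⟨hcyc, hsup⟩ := Equiv.Perm.mem_cycleFactorsFinset_iff.1 hc'
  obtain ⟨x, hx⟩ := hcyc.nonempty_support
  have hcx := Equiv.Perm.cycle_is_cycleOf hx hc'
  -- `σ ^ m` and `c ^ m` agree at `x`, and `c ^ m` fixes `x` only when `c ^ m = 1`.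
  have hfix : ∀ m : ℕ, Function.IsPeriodicPt σ m x ↔ c ^ m = 1 := by
    intro m
    rw [hcyc.pow_eq_one_iff' (Equiv.Perm.mem_support.1 hx), hcx,
      Equiv.Perm.cycleOf_pow_apply_self, Function.IsPeriodicPt, Function.IsFixedPt,
      Equiv.Perm.iterate_eq_pow]
  rw [← h x, Function.comp_apply, ← hcyc.orderOf]
  refine Nat.dvd_antisymm ?_ ?_
  · exact orderOf_dvd_of_pow_eq_one ((hfix _).1 (Function.isPeriodicPt_minimalPeriod _ _))
  · exact ((hfix _).2 (pow_orderOf_eq_one c)).minimalPeriod_dvd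

/-- For `k ≥ 3` and odd `j`, the permutation `i ↦ 3·(i + j)` of `ZMod 2^k`
has exactly `2` cycles, each of length `2^(k-1)`. -/
theorem cyc_mul_three_shift_odd (k : ℕ) (hk : 3 ≤ k) (j : ℤ) (hj : Odd j)
    (σ : Equiv.Perm (ZMod (2 ^ k)))
    (hσ : ∀ i : ZMod (2 ^ k), σ i = 3 * (i + (j : ZMod (2 ^ k)))) :
    cyc σ = 2 ∧ σ.cycleType = {2 ^ (k - 1), 2 ^ (k - 1)} := by
  obtain ⟨n, rfl⟩ := Nat.exists_eq_add_of_le' hk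
  have hper := minimalPeriod_mul_three_shift n j hj σ hσ
  have hpos : 0 < 2 ^ (n + 2) := by positivity
  have hk1 : n + 3 - 1 = n + 2 := rfl
  rw [hk1]
  constructor
  · have h := cyc_mul_eq_card σ _ hper
    rw [Nat.card_zmod] at h
    exact Nat.eq_of_mul_eq_mul_right hpos (h.trans (pow_succ' 2 (n + 2)))
  · have hrep := Multiset.eq_replicate_card.2 fun m hm => eq_of_mem_cycleType σ _ hper (m := m) hm
    have hsupp : σ.support = Finset.univ := by
      ext x
      simp only [Equiv.Perm.mem_support, Finset.mem_univ, iff_true]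
      intro hx
      have h1 := Function.minimalPeriod_eq_one_iff_isFixedPt.2 hx
      rw [hper x] at h1
      have := Nat.one_lt_two_pow (n := n + 2) (by omega)
      omega
    have hsum := σ.sum_cycleType
    rw [hsupp, Finset.card_univ, ZMod.card, hrep, Multiset.sum_replicate, smul_eq_mul] at hsum
    have hcard : σ.cycleType.card = 2 :=
      Nat.eq_of_mul_eq_mul_right hpos (hsum.trans (pow_succ' 2 (n + 2)))
    rw [hrep, hcard]
    rfl
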